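/- Let M ∈ ℂ^{p×p} be invertible and let A, B ∈ ℂ^{n×n×p} be *_M-pseudo-positive-definite. Then the Riccati tensor equation X *_M A⁻¹ *_M X = B has a unique *_M-pseudo-positive-definite solution X, and this solution equals the tensor geometric mean A #_M B = A^{1/2} *_M (A^{−1/2} *_M B *_M A^{−1/2})^{1/2} *_M A^{1/2}. -/

import Mathlib

open Matrix
open scoped ComplexOrder

attribute [local instance] Classical.propDecidable

noncomputable section

/-- Mode-3 product of a third-order complex tensor (stack of `p` frontal slices)
with a matrix `M ∈ ℂ^{q×p}`: `(A ×₃ M)ₖ = Σ_l M k l • A l`. -/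
def mode3 {m n p q : ℕ} (M : Matrix (Fin q) (Fin p) ℂ)
    (A : Fin p → Matrix (Fin m) (Fin n) ℂ) : Fin q → Matrix (Fin m) (Fin n) ℂ :=
  fun k => ∑ l, M k l • A l

/-- Face-wise product of two third-order tensors. -/
def facewise {m n s p : ℕ} (A : Fin p → Matrix (Fin m) (Fin n) ℂ)
    (B : Fin p → Matrix (Fin n) (Fin s) ℂ) : Fin p → Matrix (Fin m) (Fin s) ℂ :=
  fun i => A i * B i

/-- Tensor-tensor multiplication with an invertible `M ∈ ℂ^{p×p}`:
`A *_M B = ((A ×₃ M) △ (B ×₃ M)) ×₃ M⁻¹`. -/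
def tmul3 {m n s p : ℕ} (M : Matrix (Fin p) (Fin p) ℂ)
    (A : Fin p → Matrix (Fin m) (Fin n) ℂ) (B : Fin p → Matrix (Fin n) (Fin s) ℂ) :
    Fin p → Matrix (Fin m) (Fin s) ℂ :=
  mode3 M⁻¹ (facewise (mode3 M A) (mode3 M B))

/-- `A ∈ ℂ^{n×n×p}` is `*_M`-pseudo-positive-definite if every frontal slice of
`A ×₃ M` is (Hermitian) positive-definite. -/
def PseudoPD {n p : ℕ} (M : Matrix (Fin p) (Fin p) ℂ)
    (A : Fin p → Matrix (Fin n) (Fin n) ℂ) : Prop :=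
  ∀ i, (mode3 M A i).PosDef

/-- The `*_M`-identity tensor: all frontal slices of `I ×₃ M` equal `I_n`. -/
def tId {p : ℕ} (n : ℕ) (M : Matrix (Fin p) (Fin p) ℂ) :
    Fin p → Matrix (Fin n) (Fin n) ℂ :=
  mode3 M⁻¹ (fun _ => 1)

/-- The `*_M`-inverse of a tensor (the unique two-sided inverse when it exists). -/
def tinv {n p : ℕ} (M : Matrix (Fin p) (Fin p) ℂ)
    (A : Fin p → Matrix (Fin n) (Fin n) ℂ) : Fin p → Matrix (Fin n) (Fin n) ℂ :=
  if h : ∃ X, tmul3 M A X = tId n M ∧ tmul3 M X A = tId n M then h.choose else 0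

/-- The `*_M`-pseudo-positive-definite square root of a tensor (the unique
pseudo-positive-definite `B` with `B *_M B = A`, when it uniquely exists). -/
def tsqrt {n p : ℕ} (M : Matrix (Fin p) (Fin p) ℂ)
    (A : Fin p → Matrix (Fin n) (Fin n) ℂ) : Fin p → Matrix (Fin n) (Fin n) ℂ :=
  if h : ∃! B, PseudoPD M B ∧ tmul3 M B B = A then h.choose else 0

/-- The tensor geometric mean
`A #_M B = A^{1/2} *_M (A^{−1/2} *_M B *_M A^{−1/2})^{1/2} *_M A^{1/2}`,
where `A^{−1/2} = (A^{1/2})⁻¹`. -/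
def geomean {n p : ℕ} (M : Matrix (Fin p) (Fin p) ℂ)
    (A B : Fin p → Matrix (Fin n) (Fin n) ℂ) : Fin p → Matrix (Fin n) (Fin n) ℂ :=
  tmul3 M (tmul3 M (tsqrt M A)
    (tsqrt M (tmul3 M (tmul3 M (tinv M (tsqrt M A)) B) (tinv M (tsqrt M A)))))
    (tsqrt M A)

end

namespace Matrix

variable {ι : Type*} [Fintype ι] [DecidableEq ι]

open scoped MatrixOrder in
/-- A positive-definite matrix has a positive-definite square root. -/
theorem PosDef.exists_posDef_mul_self {A : Matrix ι ι ℂ} (hA : A.PosDef) :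
    ∃ S : Matrix ι ι ℂ, S.PosDef ∧ S * S = A := by
  have hS : CFC.sqrt A * CFC.sqrt A = A := CFC.sqrt_mul_sqrt_self A hA.posSemidef.nonneg
  refine ⟨CFC.sqrt A, ?_, hS⟩
  rw [(CFC.sqrt_nonneg A).posSemidef.posDef_iff_det_ne_zero]
  intro h
  apply hA.det_pos.ne'
  rw [← hS, det_mul, h, zero_mul]

open scoped MatrixOrder in
/-- Positive-semidefinite square roots of a matrix are unique. -/
theorem PosSemidef.eq_of_mul_self_eq {S T : Matrix ι ι ℂ} (hS : S.PosSemidef)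
    (hT : T.PosSemidef) (h : S * S = T * T) : S = T :=
  (CFC.mul_self_eq_mul_self_iff S T hS.nonneg hT.nonneg).1 h

/-- The congruence of a positive-definite matrix by a positive-definite matrix is
positive definite. -/
theorem PosDef.mul_mul_self {S X : Matrix ι ι ℂ} (hS : S.PosDef) (hX : X.PosDef) :
    (S * X * S).PosDef := by
  have h := hX.mul_mul_conjTranspose_same (B := S) (vecMul_injective_of_isUnit hS.isUnit)
  rwa [hS.isHermitian.eq] at h

/-- The Riccati equation `X * (S * S)⁻¹ * X = B` has the unique positive-definite solution
`S * R * S`, where `R` is the positive-definite square root of `S⁻¹ * B * S⁻¹`. -/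
theorem PosDef.riccati_iff {S R B X : Matrix ι ι ℂ} (hS : S.PosDef) (hR : R.PosDef)
    (hRB : R * R = S⁻¹ * B * S⁻¹) :
    (X.PosDef ∧ X * (S * S)⁻¹ * X = B) ↔ X = S * R * S := by
  have hdet : IsUnit S.det := S.isUnit_iff_isUnit_det.1 hS.isUnit
  constructor
  · rintro ⟨hX, rfl⟩
    have h : S⁻¹ * X * S⁻¹ = R := by
      refine (hS.inv.mul_mul_self hX).posSemidef.eq_of_mul_self_eq hR.posSemidef ?_
      rw [hRB, mul_inv_rev]
      simp only [mul_assoc]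
    rw [← h]
    simp only [mul_assoc, nonsing_inv_mul S hdet, mul_one, mul_nonsing_inv_cancel_left S _ hdet]
  · rintro rfl
    refine ⟨hS.mul_mul_self hR, ?_⟩
    calc S * R * S * (S * S)⁻¹ * (S * R * S) = S * (R * R) * S := by
          simp only [mul_inv_rev, mul_assoc, mul_nonsing_inv_cancel_left S _ hdet,
            nonsing_inv_mul_cancel_left S _ hdet]
      _ = B := by
          simp only [hRB, mul_assoc, nonsing_inv_mul S hdet, mul_one,
            mul_nonsing_inv_cancel_left S _ hdet]

end Matrix

theorem mode3_mode3 {m n p q r : ℕ} (N : Matrix (Fin r) (Fin q) ℂ) (M : Matrix (Fin q) (Fin p) ℂ)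
    (A : Fin p → Matrix (Fin m) (Fin n) ℂ) : mode3 N (mode3 M A) = mode3 (N * M) A := by
  funext k
  simp only [mode3, Matrix.mul_apply, Finset.smul_sum, Finset.sum_smul, smul_smul]
  exact Finset.sum_comm

theorem mode3_one {m n p : ℕ} (A : Fin p → Matrix (Fin m) (Fin n) ℂ) : mode3 1 A = A := by
  funext k
  simp [mode3, Matrix.one_apply, ite_smul]

section InvertibleTransform

variable {m n s p : ℕ} {M : Matrix (Fin p) (Fin p) ℂ}

theorem mode3_mode3_inv (hM : IsUnit M.det) (A : Fin p → Matrix (Fin m) (Fin n) ℂ) :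
    mode3 M (mode3 M⁻¹ A) = A := by
  rw [mode3_mode3, Matrix.mul_nonsing_inv M hM, mode3_one]

theorem mode3_injective (hM : IsUnit M.det) :
    Function.Injective (mode3 M : (Fin p → Matrix (Fin m) (Fin n) ℂ) → _) := by
  refine Function.LeftInverse.injective (g := mode3 M⁻¹) fun A => ?_
  rw [mode3_mode3, Matrix.nonsing_inv_mul M hM, mode3_one]

theorem eq_iff_forall_mode3 (hM : IsUnit M.det) {A B : Fin p → Matrix (Fin m) (Fin n) ℂ} :
    A = B ↔ ∀ i, mode3 M A i = mode3 M B i := by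
  rw [← (mode3_injective hM).eq_iff, funext_iff]

theorem mode3_tmul3 (hM : IsUnit M.det) (A : Fin p → Matrix (Fin m) (Fin n) ℂ)
    (B : Fin p → Matrix (Fin n) (Fin s) ℂ) (i : Fin p) :
    mode3 M (tmul3 M A B) i = mode3 M A i * mode3 M B i := by
  rw [tmul3, mode3_mode3_inv hM, facewise]

theorem mode3_tId (hM : IsUnit M.det) (i : Fin p) : mode3 M (tId n M) i = 1 := by
  rw [tId, mode3_mode3_inv hM]

theorem PseudoPD.mode3_tinv {A : Fin p → Matrix (Fin n) (Fin n) ℂ} (hM : IsUnit M.det)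
    (hA : PseudoPD M A) (i : Fin p) : mode3 M (tinv M A) i = (mode3 M A i)⁻¹ := by
  have hdet (j : Fin p) : IsUnit (mode3 M A j).det :=
    (mode3 M A j).isUnit_iff_isUnit_det.1 (hA j).isUnit
  have h : ∃ X, tmul3 M A X = tId n M ∧ tmul3 M X A = tId n M := by
    refine ⟨mode3 M⁻¹ fun j => (mode3 M A j)⁻¹, ?_, ?_⟩ <;>
      refine (eq_iff_forall_mode3 hM).2 fun j => ?_
    · rw [mode3_tmul3 hM, mode3_tId hM, mode3_mode3_inv hM, Matrix.mul_nonsing_inv _ (hdet j)]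
    · rw [mode3_tmul3 hM, mode3_tId hM, mode3_mode3_inv hM, Matrix.nonsing_inv_mul _ (hdet j)]
  rw [tinv, dif_pos h]
  refine (Matrix.inv_eq_right_inv ?_).symm
  rw [← mode3_tmul3 hM, h.choose_spec.1, mode3_tId hM]

/-- A pseudo-positive-definite tensor has a unique pseudo-positive-definite square root. -/
theorem PseudoPD.existsUnique_sqrt {A : Fin p → Matrix (Fin n) (Fin n) ℂ} (hM : IsUnit M.det)
    (hA : PseudoPD M A) : ∃! B, PseudoPD M B ∧ tmul3 M B B = A := by
  choose S hS hSA using fun i => (hA i).exists_posDef_mul_self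
  refine ⟨mode3 M⁻¹ S, ⟨fun i => ?_, (eq_iff_forall_mode3 hM).2 fun i => ?_⟩, ?_⟩
  · rw [mode3_mode3_inv hM]
    exact hS i
  · rw [mode3_tmul3 hM, mode3_mode3_inv hM, hSA]
  · rintro T ⟨hT, rfl⟩
    refine (eq_iff_forall_mode3 hM).2 fun i => ?_
    rw [mode3_mode3_inv hM]
    refine (hT i).posSemidef.eq_of_mul_self_eq (hS i).posSemidef ?_
    rw [hSA, mode3_tmul3 hM]

theorem PseudoPD.tsqrt_spec {A : Fin p → Matrix (Fin n) (Fin n) ℂ} (hM : IsUnit M.det)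
    (hA : PseudoPD M A) : PseudoPD M (tsqrt M A) ∧ tmul3 M (tsqrt M A) (tsqrt M A) = A := by
  have h := hA.existsUnique_sqrt hM
  rw [tsqrt, dif_pos h]
  exact h.choose_spec.1

end InvertibleTransform

/-- for invertible `M ∈ ℂ^{p×p}` and `*_M`-pseudo-positive-definite
`A, B ∈ ℂ^{n×n×p}`, the Riccati tensor equation `X *_M A⁻¹ *_M X = B` has a unique
`*_M`-pseudo-positive-definite solution, namely the tensor geometric mean
`A #_M B = A^{1/2} *_M (A^{−1/2} *_M B *_M A^{−1/2})^{1/2} *_M A^{1/2}`. -/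
theorem riccati_unique_solution_geomean {n p : ℕ} (M : Matrix (Fin p) (Fin p) ℂ)
    (hM : IsUnit M.det) (A B : Fin p → Matrix (Fin n) (Fin n) ℂ)
    (hA : PseudoPD M A) (hB : PseudoPD M B) :
    ∀ X : Fin p → Matrix (Fin n) (Fin n) ℂ,
      (PseudoPD M X ∧ tmul3 M (tmul3 M X (tinv M A)) X = B) ↔ X = geomean M A B := by
  intro X
  obtain ⟨hS, hSA⟩ := hA.tsqrt_spec hM
  have hC : PseudoPD M (tmul3 M (tmul3 M (tinv M (tsqrt M A)) B) (tinv M (tsqrt M A))) := by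
    intro i
    rw [mode3_tmul3 hM, mode3_tmul3 hM, hS.mode3_tinv hM]
    exact (hS i).inv.mul_mul_self (hB i)
  obtain ⟨hR, hRC⟩ := hC.tsqrt_spec hM
  have key (i : Fin p) :
      ((mode3 M X i).PosDef ∧ mode3 M (tmul3 M (tmul3 M X (tinv M A)) X) i = mode3 M B i) ↔
        mode3 M X i = mode3 M (geomean M A B) i := by
    have hAi := (eq_iff_forall_mode3 hM).1 hSA i
    have hCi := (eq_iff_forall_mode3 hM).1 hRC i
    simp only [mode3_tmul3 hM, hS.mode3_tinv hM] at hAi hCi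
    simp only [geomean, mode3_tmul3 hM, hA.mode3_tinv hM, ← hAi]
    exact (hS i).riccati_iff (hR i) hCi
  rw [eq_iff_forall_mode3 hM, eq_iff_forall_mode3 hM, PseudoPD, ← forall_and]
  exact forall_congr' key
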